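/- arXiv:math/0410438 — 2 statements merged into one kernel-verified Lean document; each statement's English description precedes it below -/
import Mathlib

section
/- Let α be an N×N complex matrix whose spectrum lies in the open upper half plane, and let Λ be an N×k complex matrix. Then the unique Hermitian solution Σ of the Lyapunov-type identity αΣ − Σα* = iΛΛ* is given by Σ = (1/2π) ∫_{−∞}^{∞} (α − λI_N)⁻¹ ΛΛ* (α* − λI_N)⁻¹ dλ, and this Σ is positive semidefinite; it is positive definite if the pair {α, Λ} is full range. -/
open Matrix MeasureTheory
open scoped ComplexOrder

/-!
Let `a` and `d` have spectra in the open upper and lower half planes. Writing `r_a`, `r_d` for the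
resolvents, `r_a (a x - x d) r_d = r_a x - x r_d` pointwise on the real line, and `r_a b r_d` is
taken by `x ↦ a x - x d` to `r_a b - b r_d`. So everything rests on the single evaluation
`∫ (r_a(t) b - b r_d(t)) dt = 2πi b`. By Cauchy's theorem `∫ (r_a - r_{a'}) = 0` whenever both
spectra lie in the same half plane, since the difference of the resolvents is `O(z⁻²)`; hence
`a` and `d` may be replaced by the scalars `i` and `-i`, where the integrand is `2i b / (1 + t²)`.

For `d = a*` and `b = i Λ Λ*` the integrand is a congruence of `Λ Λ*`, which gives positivity. If
moreover `Σ x = 0`, the Lyapunov equation forces `Λ* x = 0` and `Σ a* x = 0`; iterating, `x` is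
orthogonal to the range of every `a ^ k Λ`.
-/

section CauchyHalfPlane

open Filter Topology Bornology Asymptotics Complex

variable {E : Type*} [NormedAddCommGroup E] [NormedSpace ℂ E] {f : ℂ → E}

theorem norm_intervalIntegral_le_of_differentiableOn_im_nonpos
    (hf : DifferentiableOn ℂ f {z | z.im ≤ 0}) {T M : ℝ} (hT : 0 ≤ T)
    (hM : ∀ z : ℂ, T ≤ ‖z‖ → ‖f z‖ ≤ M) : ‖∫ t in (-T)..T, f t‖ ≤ 4 * T * M := by
  have cauchy := integral_boundary_rect_eq_zero_of_differentiableOn f ⟨-T, -T⟩ ⟨T, 0⟩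
    (hf.mono fun z hz => by
      have him := hz.2
      rw [Set.mem_preimage, Set.uIcc_of_le (neg_nonpos.2 hT)] at him
      exact him.2)
  simp only [ofReal_zero, zero_mul, add_zero] at cauchy
  have bottom : ‖∫ x : ℝ in (-T)..T, f (x + (-T : ℝ) * I)‖ ≤ M * |T - -T| := by
    refine intervalIntegral.norm_integral_le_of_norm_le_const fun x _ => hM _ ?_
    simpa [abs_of_nonneg hT] using abs_im_le_norm ((x : ℂ) + (-T : ℝ) * I)
  have right : ‖I • ∫ y : ℝ in (-T)..0, f ((T : ℝ) + y * I)‖ ≤ M * |0 - -T| := by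
    rw [norm_smul, norm_I, one_mul]
    refine intervalIntegral.norm_integral_le_of_norm_le_const fun y _ => hM _ ?_
    simpa [abs_of_nonneg hT] using abs_re_le_norm ((T : ℂ) + y * I)
  have left : ‖I • ∫ y : ℝ in (-T)..0, f ((-T : ℝ) + y * I)‖ ≤ M * |0 - -T| := by
    rw [norm_smul, norm_I, one_mul]
    refine intervalIntegral.norm_integral_le_of_norm_le_const fun y _ => hM _ ?_
    simpa [abs_of_nonneg hT] using abs_re_le_norm (((-T : ℝ) : ℂ) + y * I)
  have top : ∫ t in (-T)..T, f t = (∫ x : ℝ in (-T)..T, f (x + (-T : ℝ) * I))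
      + I • (∫ y : ℝ in (-T)..0, f ((T : ℝ) + y * I))
      - I • ∫ y : ℝ in (-T)..0, f ((-T : ℝ) + y * I) := by
    rw [← sub_eq_zero, ← neg_eq_zero, ← cauchy]
    abel
  rw [top]
  refine (norm_sub_le_of_le (norm_add_le_of_le bottom right) left).trans_eq ?_
  rw [sub_neg_eq_add, sub_neg_eq_add, zero_add, abs_of_nonneg hT, abs_of_nonneg (by positivity)]
  ring

theorem integral_ofReal_eq_zero_of_differentiableOn_im_nonpos
    (hf : DifferentiableOn ℂ f {z | z.im ≤ 0}) (hdecay : f =o[cobounded ℂ] fun z => z⁻¹)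
    (hint : Integrable fun t : ℝ => f t) : ∫ t : ℝ, f t = 0 := by
  refine tendsto_nhds_unique
    (intervalIntegral_tendsto_integral hint tendsto_neg_atTop_atBot tendsto_id) ?_
  refine NormedAddGroup.tendsto_nhds_zero.2 fun ε hε => ?_
  have hsmall := hdecay.def (show 0 < ε / 8 by positivity)
  rw [← comap_norm_atTop, (atTop_basis.comap norm).eventually_iff] at hsmall
  obtain ⟨r, -, hr⟩ := hsmall
  filter_upwards [eventually_gt_atTop 0, eventually_ge_atTop r] with T hT hrT
  calc ‖∫ t in (-T)..T, f t‖ ≤ 4 * T * (ε / 8 * T⁻¹) := by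
        refine norm_intervalIntegral_le_of_differentiableOn_im_nonpos hf hT.le fun z hz => ?_
        refine (hr (hrT.trans hz)).trans ?_
        rw [norm_inv]
        gcongr
    _ = ε / 2 := by field_simp; norm_num
    _ < ε := half_lt_self hε

end CauchyHalfPlane

section RealIntegrals

open Filter Bornology Asymptotics

theorem integrable_of_continuous_of_isBigO_inv_sq {E : Type*} [NormedAddCommGroup E] {f : ℝ → E}
    (hf : Continuous f) (hO : f =O[cobounded ℝ] fun t => (t ^ 2)⁻¹) : Integrable f := by
  have hcompare : (fun t : ℝ => (t ^ 2)⁻¹) =O[cobounded ℝ] fun t => (1 + t ^ 2)⁻¹ := by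
    refine IsBigO.of_bound 2 ?_
    filter_upwards [eventually_cobounded_le_norm (1 : ℝ)] with t ht
    have one_le_sq : 1 ≤ t ^ 2 := (one_le_sq_iff_one_le_abs t).2 ht
    rw [norm_inv, norm_inv, Real.norm_of_nonneg (by positivity),
      Real.norm_of_nonneg (by positivity), ← div_eq_mul_inv,
      inv_le_comm₀ (by positivity) (by positivity), inv_div, div_le_iff₀ (by positivity)]
    linarith
  refine hf.locallyIntegrable.integrable_of_isBigO_cocompact ?_
    (integrable_inv_one_add_sq.integrableAtFilter _)
  rw [← Metric.cobounded_eq_cocompact]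
  exact hO.trans hcompare

theorem inv_sub_I_sub_inv_add_I (t : ℝ) :
    ((t : ℂ) - Complex.I)⁻¹ - ((t : ℂ) + Complex.I)⁻¹ =
      2 * Complex.I * ((1 + t ^ 2)⁻¹ : ℝ) := by
  have hsub : (t : ℂ) - Complex.I ≠ 0 := fun h => by simpa using congrArg Complex.im h
  have hadd : (t : ℂ) + Complex.I ≠ 0 := fun h => by simpa using congrArg Complex.im h
  have hfactor : 1 + (t : ℂ) ^ 2 = (t - Complex.I) * (t + Complex.I) := by
    linear_combination Complex.I_sq
  push_cast
  rw [hfactor]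
  field_simp
  ring

theorem integrable_inv_sub_I_sub_inv_add_I :
    Integrable fun t : ℝ => ((t : ℂ) - Complex.I)⁻¹ - ((t : ℂ) + Complex.I)⁻¹ := by
  simp_rw [inv_sub_I_sub_inv_add_I]
  exact integrable_inv_one_add_sq.ofReal.const_mul _

theorem integral_inv_sub_I_sub_inv_add_I :
    ∫ t : ℝ, (((t : ℂ) - Complex.I)⁻¹ - ((t : ℂ) + Complex.I)⁻¹) =
      2 * Real.pi * Complex.I := by
  simp_rw [inv_sub_I_sub_inv_add_I]
  rw [integral_const_mul, integral_complex_ofReal, integral_univ_inv_one_add_sq]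
  ring

end RealIntegrals

section Resolvent

open scoped Ring

theorem ringInverse_neg {R : Type*} [Ring R] (x : R) : (-x)⁻¹ʳ = -x⁻¹ʳ := by
  have h : (-1 : R)⁻¹ʳ = -1 := Ring.inverse_unit (-1)
  rw [← mul_neg_one, Ring.inverse_mul (Or.inr isUnit_one.neg), h, neg_one_mul]

variable {R A : Type*} [CommRing R] [Ring A] [Algebra R A] {a d : A} {z : R}

theorem resolvent_neg_neg (a : A) (z : R) : resolvent (-a) (-z) = -resolvent a z := by
  rw [resolvent, resolvent, ← ringInverse_neg, map_neg, neg_sub_neg, neg_sub]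

theorem resolvent_mul_sylvester_mul_resolvent (ha : z ∈ resolventSet R a)
    (hd : z ∈ resolventSet R d) (x : A) :
    resolvent a z * (a * x - x * d) * resolvent d z = resolvent a z * x - x * resolvent d z := by
  have hleft : resolvent a z * (algebraMap R A z - a) = 1 := Ring.inverse_mul_cancel _ ha
  have hright : (algebraMap R A z - d) * resolvent d z = 1 := Ring.mul_inverse_cancel _ hd
  have hsplit : a * x - x * d = x * (algebraMap R A z - d) - (algebraMap R A z - a) * x := by
    rw [mul_sub, sub_mul, Algebra.commutes z x]
    abel
  rw [hsplit, mul_sub, sub_mul, ← mul_assoc _ _ x, hleft, one_mul, mul_assoc, mul_assoc x,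
    hright, mul_one]

theorem sylvester_resolvent_mul_mul_resolvent (ha : z ∈ resolventSet R a)
    (hd : z ∈ resolventSet R d) (b : A) :
    a * (resolvent a z * b * resolvent d z) - resolvent a z * b * resolvent d z * d =
      resolvent a z * b - b * resolvent d z := by
  have hleft : a * resolvent a z = algebraMap R A z * resolvent a z - 1 := by
    rw [← Ring.mul_inverse_cancel _ ha, ← resolvent, sub_mul, sub_sub_cancel]
  have hright : resolvent d z * d = resolvent d z * algebraMap R A z - 1 := by
    rw [← Ring.inverse_mul_cancel _ hd, ← resolvent, mul_sub, sub_sub_cancel]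
  rw [mul_assoc _ _ d, hright, ← mul_assoc, ← mul_assoc, hleft, mul_sub, sub_mul, sub_mul,
    mul_one, one_mul, ← mul_assoc _ _ (algebraMap R A z), ← Algebra.commutes z, mul_assoc,
    mul_assoc, mul_assoc, sub_sub_sub_cancel_left]

theorem resolvent_star_star [StarRing R] [StarRing A] [StarModule R A] (a : A) (z : R) :
    resolvent (star a) (star z) = star (resolvent a z) := by
  rw [resolvent, resolvent, ← Ring.inverse_star, star_sub, algebraMap_star_comm]

end Resolvent

section ResolventField

variable {K A : Type*} [Field K] [Ring A] [Algebra K A]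

theorem mem_resolventSet_algebraMap {w z : K} (h : z ≠ w) :
    z ∈ resolventSet K (algebraMap K A w) := by
  rw [spectrum.mem_resolventSet_iff, ← map_sub]
  exact (sub_ne_zero.2 h).isUnit.map (algebraMap K A)

theorem resolvent_algebraMap (w z : K) :
    resolvent (algebraMap K A w) z = algebraMap K A (z - w)⁻¹ := by
  rw [resolvent, ← map_sub]
  obtain h | h := eq_or_ne (z - w) 0
  · rw [h, _root_.inv_zero, map_zero, Ring.inverse_zero]
  · exact Ring.inverse_unit ((Units.mk0 _ h).map (algebraMap K A).toMonoidHom)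

end ResolventField

section HalfPlaneSpectrum

variable {A : Type*} [Ring A] [Algebra ℂ A] {a : A}

theorem mem_resolventSet_of_im_nonpos (ha : ∀ μ ∈ spectrum ℂ a, 0 < μ.im) (z : ℂ)
    (hz : z.im ≤ 0) : z ∈ resolventSet ℂ a :=
  not_not.1 fun h => (ha z h).not_ge hz

theorem mem_resolventSet_of_im_nonneg (ha : ∀ μ ∈ spectrum ℂ a, μ.im < 0) (z : ℂ)
    (hz : 0 ≤ z.im) : z ∈ resolventSet ℂ a :=
  not_not.1 fun h => (ha z h).not_ge hz

theorem im_neg_of_mem_spectrum_star [StarRing A] [StarModule ℂ A]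
    (ha : ∀ μ ∈ spectrum ℂ a, 0 < μ.im) :
    ∀ μ ∈ spectrum ℂ (star a), μ.im < 0 := by
  intro μ hμ
  rw [spectrum.map_star, Set.mem_star] at hμ
  simpa using ha _ hμ

end HalfPlaneSpectrum

section BanachAlgebra

open Filter Bornology Asymptotics

variable {A : Type*} [NormedRing A] [NormedAlgebra ℂ A] [CompleteSpace A] {a a' d d' : A}

theorem continuous_resolvent_ofReal (ha : ∀ t : ℝ, (t : ℂ) ∈ resolventSet ℂ a) :
    Continuous fun t : ℝ => resolvent a (t : ℂ) :=
  continuous_iff_continuousAt.2 fun t =>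
    (spectrum.hasDerivAt_resolvent_const_left (ha t)).continuousAt.comp (f := ((↑) : ℝ → ℂ))
      Complex.continuous_ofReal.continuousAt

theorem isBigO_resolvent_ofReal (a : A) :
    (fun t : ℝ => resolvent a (t : ℂ)) =O[cobounded ℝ] fun t => t⁻¹ :=
  ((spectrum.resolvent_isBigO_inv a).comp_tendsto
    (RCLike.tendsto_ofReal_cobounded_cobounded ℂ)).trans
    (IsBigO.of_norm_right (IsBigO.of_bound 1 (by simp)))

theorem integrable_resolvent_mul_mul_resolvent (ha : ∀ t : ℝ, (t : ℂ) ∈ resolventSet ℂ a)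
    (hd : ∀ t : ℝ, (t : ℂ) ∈ resolventSet ℂ d) (b : A) :
    Integrable fun t : ℝ => resolvent a (t : ℂ) * b * resolvent d (t : ℂ) := by
  refine integrable_of_continuous_of_isBigO_inv_sq
    (((continuous_resolvent_ofReal ha).mul continuous_const).mul
      (continuous_resolvent_ofReal hd)) ?_
  refine (((isBigO_resolvent_ofReal a).mul (isBigO_const_const b one_ne_zero _)).mul
    (isBigO_resolvent_ofReal d)).congr_right fun t => ?_
  rw [mul_one, sq, mul_inv]

theorem integrable_resolvent_sub_resolvent (ha : ∀ t : ℝ, (t : ℂ) ∈ resolventSet ℂ a)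
    (ha' : ∀ t : ℝ, (t : ℂ) ∈ resolventSet ℂ a') :
    Integrable fun t : ℝ => resolvent a (t : ℂ) - resolvent a' (t : ℂ) := by
  simp_rw [spectrum.resolvent_sub_resolvent (ha _) (ha' _)]
  exact integrable_resolvent_mul_mul_resolvent ha ha' _

theorem isLittleO_resolvent_mul_mul_resolvent (a b d : A) :
    (fun z => resolvent a z * b * resolvent d z) =o[cobounded ℂ] fun z => z⁻¹ := by
  have hleft : (fun z => resolvent a z * b) =O[cobounded ℂ] fun z => z⁻¹ := by
    simpa only [mul_one] using
      (spectrum.resolvent_isBigO_inv a).mul (isBigO_const_const b (one_ne_zero' ℂ) _)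
  have hright : resolvent d =o[cobounded ℂ] fun _ => (1 : ℂ) :=
    (isLittleO_one_iff ℂ).2 (spectrum.resolvent_tendsto_cobounded d)
  simpa only [mul_one] using hleft.mul_isLittleO hright

theorem integral_resolvent_sub_resolvent_of_im_nonpos
    (ha : ∀ z : ℂ, z.im ≤ 0 → z ∈ resolventSet ℂ a)
    (ha' : ∀ z : ℂ, z.im ≤ 0 → z ∈ resolventSet ℂ a') :
    ∫ t : ℝ, (resolvent a (t : ℂ) - resolvent a' (t : ℂ)) = 0 := by
  have haR (t : ℝ) := ha t (Complex.ofReal_im t).le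
  have haR' (t : ℝ) := ha' t (Complex.ofReal_im t).le
  simp_rw [spectrum.resolvent_sub_resolvent (haR _) (haR' _)]
  refine integral_ofReal_eq_zero_of_differentiableOn_im_nonpos
    (f := fun z => resolvent a z * (a - a') * resolvent a' z) (fun z hz => ?_)
    (isLittleO_resolvent_mul_mul_resolvent _ _ _)
    (integrable_resolvent_mul_mul_resolvent haR haR' _)
  have hra := (spectrum.hasDerivAt_resolvent_const_left (ha z hz)).differentiableAt
  have hra' := (spectrum.hasDerivAt_resolvent_const_left (ha' z hz)).differentiableAt
  exact ((hra.mul_const _).mul hra').differentiableWithinAt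

theorem integral_resolvent_sub_resolvent_of_im_nonneg
    (hd : ∀ z : ℂ, 0 ≤ z.im → z ∈ resolventSet ℂ d)
    (hd' : ∀ z : ℂ, 0 ≤ z.im → z ∈ resolventSet ℂ d') :
    ∫ t : ℝ, (resolvent d (t : ℂ) - resolvent d' (t : ℂ)) = 0 := by
  have mem_neg {c : A} (hc : ∀ z : ℂ, 0 ≤ z.im → z ∈ resolventSet ℂ c) (z : ℂ) (hz : z.im ≤ 0) :
      z ∈ resolventSet ℂ (-c) := by
    rw [resolventSet_neg, Set.mem_neg]
    exact hc _ (by simpa using hz)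
  rw [← neg_eq_zero, ← integral_neg_eq_self, ← integral_neg,
    ← integral_resolvent_sub_resolvent_of_im_nonpos (mem_neg hd) (mem_neg hd')]
  congr 1 with t
  rw [neg_sub', ← resolvent_neg_neg, ← resolvent_neg_neg, Complex.ofReal_neg, neg_neg]

theorem integral_resolvent_mul_sub_mul_resolvent (ha : ∀ μ ∈ spectrum ℂ a, 0 < μ.im)
    (hd : ∀ μ ∈ spectrum ℂ d, μ.im < 0) (b : A) :
    ∫ t : ℝ, (resolvent a (t : ℂ) * b - b * resolvent d (t : ℂ)) =
      (2 * Real.pi * Complex.I) • b := by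
  let i : A := algebraMap ℂ A Complex.I
  let j : A := algebraMap ℂ A (-Complex.I)
  have hi (z : ℂ) (hz : z.im ≤ 0) : z ∈ resolventSet ℂ i :=
    mem_resolventSet_algebraMap fun h => by norm_num [h] at hz
  have hj (z : ℂ) (hz : 0 ≤ z.im) : z ∈ resolventSet ℂ j :=
    mem_resolventSet_algebraMap fun h => by norm_num [h] at hz
  replace ha := mem_resolventSet_of_im_nonpos ha
  replace hd := mem_resolventSet_of_im_nonneg hd
  have hsplit (t : ℝ) : resolvent a (t : ℂ) * b - b * resolvent d (t : ℂ) =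
      (resolvent a (t : ℂ) - resolvent i (t : ℂ)) * b -
        b * (resolvent d (t : ℂ) - resolvent j (t : ℂ)) +
        (((t : ℂ) - Complex.I)⁻¹ - ((t : ℂ) + Complex.I)⁻¹) • b := by
    rw [resolvent_algebraMap, resolvent_algebraMap, sub_neg_eq_add, sub_mul, mul_sub,
      ← Algebra.commutes _ b, ← Algebra.smul_def, ← Algebra.smul_def, sub_smul]
    abel
  have hintA := integrable_resolvent_sub_resolvent
    (fun t => ha t (Complex.ofReal_im t).le) fun t => hi t (Complex.ofReal_im t).le
  have hintD := integrable_resolvent_sub_resolvent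
    (fun t => hd t (Complex.ofReal_im t).ge) fun t => hj t (Complex.ofReal_im t).ge
  have hintAD : Integrable fun t : ℝ => (resolvent a (t : ℂ) - resolvent i (t : ℂ)) * b -
      b * (resolvent d (t : ℂ) - resolvent j (t : ℂ)) :=
    (hintA.mul_const b).sub (hintD.const_mul b)
  simp_rw [hsplit]
  rw [integral_add hintAD (integrable_inv_sub_I_sub_inv_add_I.smul_const b),
    integral_sub (hintA.mul_const b) (hintD.const_mul b), integral_mul_const_of_integrable hintA,
    integral_const_mul_of_integrable hintD, integral_resolvent_sub_resolvent_of_im_nonpos ha hi,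
    integral_resolvent_sub_resolvent_of_im_nonneg hd hj, zero_mul, mul_zero, sub_zero, zero_add,
    integral_smul_const, integral_inv_sub_I_sub_inv_add_I]

end BanachAlgebra

section Rosenblum

variable {A : Type*} [NormedRing A] [NormedAlgebra ℂ A] {a d : A}

/-- The Rosenblum integral `(2πi)⁻¹ ∫ (t - a)⁻¹ b (t - d)⁻¹ dt` for the solution of the Sylvester
equation `a x - x d = b`. It is taken over the real line, and so is meant for `a` and `d` whose
spectra are separated by it, `a` above and `d` below. -/
noncomputable def rosenblumIntegral (a d b : A) : A :=
  (2 * Real.pi * Complex.I)⁻¹ • ∫ t : ℝ, resolvent a (t : ℂ) * b * resolvent d (t : ℂ)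

theorem rosenblumIntegral_I_smul (a d b : A) :
    rosenblumIntegral a d (Complex.I • b) =
      (2 * Real.pi)⁻¹ • ∫ t : ℝ, resolvent a (t : ℂ) * b * resolvent d (t : ℂ) := by
  simp_rw [rosenblumIntegral, mul_smul_comm, smul_mul_assoc]
  rw [integral_smul, smul_smul, mul_inv, inv_mul_cancel_right₀ Complex.I_ne_zero,
    ← Complex.coe_smul]
  push_cast
  rfl

variable [CompleteSpace A]

theorem rosenblumIntegral_sylvester (ha : ∀ μ ∈ spectrum ℂ a, 0 < μ.im)
    (hd : ∀ μ ∈ spectrum ℂ d, μ.im < 0) (x : A) :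
    rosenblumIntegral a d (a * x - x * d) = x := by
  have haR (t : ℝ) := mem_resolventSet_of_im_nonpos ha t (Complex.ofReal_im t).le
  have hdR (t : ℝ) := mem_resolventSet_of_im_nonneg hd t (Complex.ofReal_im t).ge
  simp_rw [rosenblumIntegral, resolvent_mul_sylvester_mul_resolvent (haR _) (hdR _)]
  rw [integral_resolvent_mul_sub_mul_resolvent ha hd,
    inv_smul_smul₀ Complex.two_pi_I_ne_zero]

theorem sylvester_rosenblumIntegral (ha : ∀ μ ∈ spectrum ℂ a, 0 < μ.im)
    (hd : ∀ μ ∈ spectrum ℂ d, μ.im < 0) (b : A) :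
    a * rosenblumIntegral a d b - rosenblumIntegral a d b * d = b := by
  have haR (t : ℝ) := mem_resolventSet_of_im_nonpos ha t (Complex.ofReal_im t).le
  have hdR (t : ℝ) := mem_resolventSet_of_im_nonneg hd t (Complex.ofReal_im t).ge
  have hint := integrable_resolvent_mul_mul_resolvent haR hdR b
  rw [rosenblumIntegral, mul_smul_comm, smul_mul_assoc, ← smul_sub,
    ← integral_const_mul_of_integrable hint, ← integral_mul_const_of_integrable hint,
    ← integral_sub (hint.const_mul a) (hint.mul_const d)]
  simp_rw [sylvester_resolvent_mul_mul_resolvent (haR _) (hdR _)]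
  rw [integral_resolvent_mul_sub_mul_resolvent ha hd,
    inv_smul_smul₀ Complex.two_pi_I_ne_zero]

theorem sylvester_eq_iff_eq_rosenblumIntegral (ha : ∀ μ ∈ spectrum ℂ a, 0 < μ.im)
    (hd : ∀ μ ∈ spectrum ℂ d, μ.im < 0) {b x : A} :
    a * x - x * d = b ↔ x = rosenblumIntegral a d b := by
  constructor
  · rintro rfl
    exact (rosenblumIntegral_sylvester ha hd x).symm
  · rintro rfl
    exact sylvester_rosenblumIntegral ha hd b

end Rosenblum

theorem rosenblumIntegral_star_I_smul_nonneg {A : Type*} [CStarAlgebra A] [PartialOrder A]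
    [StarOrderedRing A] (a : A) {b : A} (hb : 0 ≤ b) :
    0 ≤ rosenblumIntegral a (star a) (Complex.I • b) := by
  rw [rosenblumIntegral_I_smul]
  refine smul_nonneg (by positivity) (integral_nonneg fun t => ?_)
  have hstar : resolvent (star a) (t : ℂ) = star (resolvent a (t : ℂ)) := by
    rw [← resolvent_star_star, ← starRingEnd_apply, Complex.conj_ofReal]
  simp only [Pi.zero_apply, hstar]
  exact star_right_conjugate_nonneg hb _

section FullRange

variable {n m R : Type*} [Fintype n] [Fintype m] [CommRing R]

/-- The pair `{α, Λ}` is full range (controllable): the ranges of `α ^ k Λ`, `k ≥ 0`, together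
span the whole space. -/
def IsFullRange [DecidableEq n] (α : Matrix n n R) (Λ : Matrix n m R) : Prop :=
  Submodule.span R {x : n → R | ∃ k : ℕ, ∃ v : m → R, x = (α ^ k * Λ) *ᵥ v} = ⊤

variable {α S : Matrix n n R} {Λ : Matrix n m R}

theorem IsFullRange.eq_zero_of_conjTranspose_mulVec [DecidableEq n] [StarRing R]
    (h : IsFullRange α Λ) {x : n → R} (hx : ∀ k : ℕ, (α ^ k * Λ)ᴴ *ᵥ x = 0) : x = 0 := by
  refine star_eq_zero.1 (dotProduct_eq_zero _ fun w => ?_)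
  have hw : w ∈ Submodule.span R {x : n → R | ∃ k : ℕ, ∃ v : m → R, x = (α ^ k * Λ) *ᵥ v} :=
    h ▸ Submodule.mem_top
  induction hw using Submodule.span_induction with
  | mem w hw =>
    obtain ⟨k, v, rfl⟩ := hw
    rw [dotProduct_mulVec, ← conjTranspose_conjTranspose (α ^ k * Λ), ← star_mulVec, hx,
      star_zero, zero_dotProduct]
  | zero => exact dotProduct_zero _
  | add w w' _ _ hw hw' => rw [dotProduct_add, hw, hw', add_zero]
  | smul c w _ hw => rw [dotProduct_smul, hw, smul_zero]

theorem mulVec_eq_zero_of_lyapunov [PartialOrder R] [StarRing R] [StarOrderedRing R]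
    [NoZeroDivisors R] (hS : S.IsHermitian) {c : R} (hc : c ≠ 0)
    (h : α * S - S * αᴴ = c • (Λ * Λᴴ)) {y : n → R} (hy : S *ᵥ y = 0) :
    Λᴴ *ᵥ y = 0 ∧ S *ᵥ (αᴴ *ᵥ y) = 0 := by
  have hyS : star y ᵥ* S = 0 := by
    rw [← hS.eq, ← star_mulVec, hy, star_zero]
  have happly : -(S *ᵥ (αᴴ *ᵥ y)) = c • (Λ *ᵥ (Λᴴ *ᵥ y)) := by
    simpa only [sub_mulVec, ← mulVec_mulVec, hy, mulVec_zero, zero_sub, smul_mulVec]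
      using congrArg (· *ᵥ y) h
  have hform : c * (star (Λᴴ *ᵥ y) ⬝ᵥ (Λᴴ *ᵥ y)) = 0 := by
    have := congrArg (star y ⬝ᵥ ·) happly
    simp only [dotProduct_neg, dotProduct_smul, dotProduct_mulVec _ S, hyS, zero_dotProduct,
      neg_zero, smul_eq_mul] at this
    rw [star_mulVec, conjTranspose_conjTranspose, ← dotProduct_mulVec, this]
  have hΛ : Λᴴ *ᵥ y = 0 :=
    dotProduct_star_self_eq_zero.1 ((mul_eq_zero.1 hform).resolve_left hc)
  rw [hΛ, mulVec_zero, smul_zero, neg_eq_zero] at happly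
  exact ⟨hΛ, happly⟩

end FullRange

theorem IsFullRange.posDef_of_lyapunov {n m 𝕜 : Type*} [Fintype n] [DecidableEq n] [Fintype m]
    [RCLike 𝕜] {α S : Matrix n n 𝕜} {Λ : Matrix n m 𝕜} (hfull : IsFullRange α Λ)
    (hS : S.PosSemidef) {c : 𝕜} (hc : c ≠ 0) (h : α * S - S * αᴴ = c • (Λ * Λᴴ)) : S.PosDef := by
  refine .of_dotProduct_mulVec_pos hS.isHermitian fun x hx => ?_
  refine (hS.dotProduct_mulVec_nonneg x).lt_of_ne' fun hx0 => hx ?_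
  have hker (k : ℕ) : S *ᵥ ((αᴴ ^ k) *ᵥ x) = 0 := by
    induction k with
    | zero => simpa using (hS.dotProduct_mulVec_zero_iff x).1 hx0
    | succ k ih =>
      rw [pow_succ', ← mulVec_mulVec]
      exact (mulVec_eq_zero_of_lyapunov hS.isHermitian hc h ih).2
  refine hfull.eq_zero_of_conjTranspose_mulVec fun k => ?_
  rw [conjTranspose_mul, conjTranspose_pow, ← mulVec_mulVec]
  exact (mulVec_eq_zero_of_lyapunov hS.isHermitian hc h (hker k)).1

section MatrixIntegral

variable {n : Type*} [Fintype n] [DecidableEq n]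

theorem inv_sub_smul_one_eq_neg_resolvent {R : Type*} [CommRing R] (α : Matrix n n R) (z : R) :
    (α - z • 1)⁻¹ = -resolvent α z := by
  rw [nonsing_inv_eq_ringInverse, resolvent, ← ringInverse_neg, neg_sub,
    Algebra.algebraMap_eq_smul_one]

open scoped Matrix.Norms.L2Operator

theorem rosenblumIntegral_I_smul_apply {α β : Matrix n n ℂ}
    (hα : ∀ μ ∈ spectrum ℂ α, 0 < μ.im) (hβ : ∀ μ ∈ spectrum ℂ β, μ.im < 0)
    (P : Matrix n n ℂ) (i j : n) :
    rosenblumIntegral α β (Complex.I • P) i j = (1 / (2 * Real.pi) : ℂ) *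
      ∫ t : ℝ, ((α - (t : ℂ) • 1)⁻¹ * P * (β - (t : ℂ) • 1)⁻¹) i j := by
  have hint := integrable_resolvent_mul_mul_resolvent
    (fun t => mem_resolventSet_of_im_nonpos hα t (Complex.ofReal_im t).le)
    (fun t => mem_resolventSet_of_im_nonneg hβ t (Complex.ofReal_im t).ge) P
  have hentry := (entryLinearMap ℂ ℂ i j).toContinuousLinearMap.integral_comp_comm hint
  have hintegrand (t : ℝ) : (α - (t : ℂ) • 1)⁻¹ * P * (β - (t : ℂ) • 1)⁻¹ =
      resolvent α (t : ℂ) * P * resolvent β (t : ℂ) := by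
    rw [inv_sub_smul_one_eq_neg_resolvent, inv_sub_smul_one_eq_neg_resolvent, neg_mul, neg_mul_neg]
  have hcast : (1 / (2 * Real.pi) : ℂ) = ((2 * Real.pi)⁻¹ : ℝ) := by
    rw [one_div, Complex.ofReal_inv, Complex.ofReal_mul, Complex.ofReal_ofNat]
  rw [rosenblumIntegral_I_smul, Matrix.smul_apply, Complex.real_smul, hcast]
  simp only [hintegrand]
  exact congrArg _ hentry.symm

end MatrixIntegral

open scoped Matrix.Norms.L2Operator MatrixOrder in
theorem stmt6_general {n m : Type*} [Fintype n] [DecidableEq n] [Fintype m]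
    {α : Matrix n n ℂ} (hspec : ∀ μ ∈ spectrum ℂ α, 0 < μ.im) {Λ : Matrix n m ℂ}
    {Sig : Matrix n n ℂ}
    (hSig : ∀ i j, Sig i j = (1 / (2 * Real.pi) : ℂ) *
      ∫ t : ℝ, ((α - (t : ℂ) • 1)⁻¹ * (Λ * Λᴴ) * (αᴴ - (t : ℂ) • 1)⁻¹) i j) :
    (∀ Z : Matrix n n ℂ, α * Z - Z * αᴴ = Complex.I • (Λ * Λᴴ) ↔ Z = Sig) ∧
    Sig.PosSemidef ∧ (IsFullRange α Λ → Sig.PosDef) := by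
  have hspec' : ∀ μ ∈ spectrum ℂ αᴴ, μ.im < 0 := im_neg_of_mem_spectrum_star hspec
  obtain rfl : Sig = rosenblumIntegral α αᴴ (Complex.I • (Λ * Λᴴ)) := by
    ext i j
    rw [hSig, rosenblumIntegral_I_smul_apply hspec hspec']
  have hpos := rosenblumIntegral_star_I_smul_nonneg α
    (posSemidef_self_mul_conjTranspose Λ).nonneg
  exact ⟨fun Z => sylvester_eq_iff_eq_rosenblumIntegral hspec hspec', hpos.posSemidef,
    fun hfull => hfull.posDef_of_lyapunov hpos.posSemidef Complex.I_ne_zero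
      (sylvester_rosenblumIntegral hspec hspec' _)⟩

theorem stmt6 {N k : ℕ}
    (α : Matrix (Fin N) (Fin N) ℂ)
    (hspec : ∀ μ ∈ spectrum ℂ α, 0 < μ.im)
    (Λ : Matrix (Fin N) (Fin k) ℂ)
    (Sig : Matrix (Fin N) (Fin N) ℂ)
    (hSig : ∀ i j, Sig i j = (1 / (2 * Real.pi) : ℂ) *
      ∫ t : ℝ, ((α - (t : ℂ) • 1)⁻¹ * (Λ * Λᴴ) * (αᴴ - (t : ℂ) • 1)⁻¹) i j) :
    Sig.IsHermitian ∧
    α * Sig - Sig * αᴴ = Complex.I • (Λ * Λᴴ) ∧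
    (∀ Z : Matrix (Fin N) (Fin N) ℂ, Z.IsHermitian →
      α * Z - Z * αᴴ = Complex.I • (Λ * Λᴴ) → Z = Sig) ∧
    Sig.PosSemidef ∧
    (Submodule.span ℂ
      {x : Fin N → ℂ | ∃ n : ℕ, ∃ v : Fin k → ℂ, x = (α ^ n * Λ) *ᵥ v} = ⊤ →
      Sig.PosDef) := by
  obtain ⟨hiff, hpos, hfull⟩ := stmt6_general hspec hSig
  exact ⟨hpos.isHermitian, (hiff Sig).2 rfl, fun Z _ => (hiff Z).1, hpos, hfull⟩
end

section
/- Let γ be an n×n complex matrix and ϑ₁, ϑ₂ be n×m matrices such that the pair {ϑ₁*, γ} is observable (zero kernel) and {γ, ϑ₂} is controllable (full range). Then the algebraic Riccati equation γX − Xγ* = i(Xϑ₁ϑ₁*X − ϑ₂ϑ₂*) has a unique positive definite Hermitian solution X. -/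
open Matrix
open scoped ComplexOrder

/-!
Put `A = iγᴴ`, `R = ϑ₁ϑ₁ᴴ`, `Q = ϑ₂ϑ₂ᴴ`. The equation becomes `Aᴴ X + X A + Q = X R X`, and it says
that the graph of `X` is invariant under the Hamiltonian operator
`H (x, y) = (A x - R y, -Q x - Aᴴ y)`. For the Hermitian form
`h (u, v) = ⟪u.1, v.2⟫ + ⟪u.2, v.1⟫` one has `Re h (u, H u) = -⟪u.1, Q u.1⟫ - ⟪u.2, R u.2⟫ ≤ 0`, and
observability and controllability make this nonzero on eigenvectors of `H`. Hence `H` has no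
imaginary eigenvalue and, by a Lyapunov argument, `h` is positive definite on the stable spectral
subspace and negative definite on the antistable one. Both therefore meet the `h`-isotropic space
`{0} × ℂⁿ` trivially, so by dimension the stable one is the graph of some `X`. An invariant graph is
contained in the stable subspace as soon as `h` is positive on it, which means that `X` has positive
real part; two such graphs differ by vectors of `{0} × ℂⁿ` and so coincide. Since `Xᴴ` is another
such solution, `X` is Hermitian.

The Lyapunov argument is an induction on the dimension through an invariant hyperplane `W` with
`f v - ν v ∈ W` for all `v`: if `u` is `h`-orthogonal to `W`, then
`Re h (u, f u) = Re ν * h (u, u)`, so `h (u, u) ≥ 0`, and polarizing the dissipation inequality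
excludes `h (u, u) = 0`.
-/

section SpectralSubspace

variable {K V : Type*} [Field K] [AddCommGroup V] [Module K V] {f : Module.End K V}
  {W : Submodule K V} {s t : Set K}

/-- The spectral subspace of `f` for a set `s` of scalars: the sum of the generalized eigenspaces
of `f` whose eigenvalues lie in `s`. -/
def spectralSubspace (f : Module.End K V) (s : Set K) : Submodule K V :=
  ⨆ μ ∈ s, f.maxGenEigenspace μ

lemma apply_mem_spectralSubspace {v : V} (hv : v ∈ spectralSubspace f s) :
    f v ∈ spectralSubspace f s := by
  suffices spectralSubspace f s ≤ (spectralSubspace f s).comap f from this hv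
  exact iSup₂_le fun μ hμ x hx => Submodule.mem_iSup_of_mem μ <| Submodule.mem_iSup_of_mem hμ <|
    f.mapsTo_maxGenEigenspace_of_comm (Commute.refl f) μ hx

lemma spectralSubspace_union :
    spectralSubspace f (s ∪ t) = spectralSubspace f s ⊔ spectralSubspace f t :=
  iSup_union

lemma mem_of_hasEigenvector_of_mem_spectralSubspace {μ : K} {v : V} (hμ : f.HasEigenvector μ v)
    (hv : v ∈ spectralSubspace f s) : μ ∈ s := by
  by_contra hμs
  have hle : spectralSubspace f s ≤ ⨆ ν ≠ μ, f.maxGenEigenspace ν :=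
    iSup₂_mono' fun ν hν => ⟨ν, ne_of_mem_of_not_mem hν hμs, le_rfl⟩
  exact hμ.2 <| Submodule.disjoint_def.1 (f.independent_maxGenEigenspace μ) v
    (Module.End.eigenspace_le_maxGenEigenspace hμ.1) (hle hv)

lemma hasEigenvector_of_restrict {hW : ∀ v ∈ W, f v ∈ W} {μ : K} {w : W}
    (hw : Module.End.HasEigenvector (f.restrict hW) μ w) : f.HasEigenvector μ (w : V) :=
  ⟨Module.End.eigenspace_restrict_le_eigenspace f hW μ (Submodule.mem_map_of_mem hw.1),
    fun h => hw.2 (Subtype.ext h)⟩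

lemma hasEigenvector_of_neg {μ : K} {v : V} (hv : Module.End.HasEigenvector (-f) μ v) :
    f.HasEigenvector (-μ) v :=
  ⟨Module.End.mem_eigenspace_iff.2 <| by
    rw [neg_smul, ← hv.apply_eq_smul, LinearMap.neg_apply, neg_neg], hv.2⟩

lemma le_spectralSubspace [IsAlgClosed K] [FiniteDimensional K V] (hW : ∀ v ∈ W, f v ∈ W)
    (hs : ∀ μ, ∀ v ∈ W, f.HasEigenvector μ v → μ ∈ s) : W ≤ spectralSubspace f s := by
  rw [← W.map_subtype_top, ← Module.End.iSup_maxGenEigenspace_eq_top (f.restrict hW),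
    Submodule.map_iSup]
  refine iSup_le fun μ => ?_
  by_cases hμ : Module.End.HasEigenvalue (f.restrict hW) μ
  · obtain ⟨w, hw⟩ := hμ.exists_hasEigenvector
    refine le_iSup₂_of_le μ (hs μ w w.2 (hasEigenvector_of_restrict hw)) ?_
    rw [Module.End.maxGenEigenspace, Module.End.genEigenspace_restrict]
    exact Submodule.map_comap_le _ _
  · have hbot : Module.End.maxGenEigenspace (f.restrict hW) μ = ⊥ :=
      not_not.1 fun h => hμ (Module.End.HasUnifEigenvalue.lt one_pos h)
    simp only [hbot, Submodule.map_bot, bot_le]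

lemma exists_isCoatom_forall_sub_smul_mem [IsAlgClosed K] [FiniteDimensional K V]
    [Nontrivial V] (f : Module.End K V) :
    ∃ ν : K, f.HasEigenvalue ν ∧ ∃ W : Submodule K V, IsCoatom W ∧ ∀ v, f v - ν • v ∈ W := by
  obtain ⟨ν, hν⟩ := Module.End.exists_eigenvalue f
  have hrange : LinearMap.range (f - ν • 1) ≠ ⊤ := by
    rw [Ne, ← LinearMap.ker_eq_bot_iff_range_eq_top, ← Module.End.eigenspace_def]
    exact hν
  obtain ⟨W, hW, hle⟩ := (eq_top_or_exists_le_coatom _).resolve_left hrange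
  exact ⟨ν, hν, W, hW, fun v => hle ⟨v, rfl⟩⟩

lemma exists_ne_zero_forall_apply_eq_zero [FiniteDimensional K V] {σ : K →+* K}
    (h : V →ₛₗ[σ] V →ₗ[K] K) (hW : W ≠ ⊤) : ∃ u ≠ 0, ∀ w ∈ W, h w u = 0 := by
  let b := Module.finBasis K W
  let φ : V →ₗ[K] Fin (Module.finrank K W) → K := LinearMap.pi fun i => h (b i)
  have hφ : LinearMap.ker φ ≠ ⊥ := LinearMap.ker_ne_bot_of_finrank_lt <| by
    rw [Module.finrank_fin_fun]
    exact Submodule.finrank_lt hW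
  obtain ⟨u, hu, hu0⟩ := Submodule.exists_mem_ne_zero_of_ne_bot hφ
  have hzero : (h.flip u).comp W.subtype = 0 := b.ext fun i => congrFun hu i
  exact ⟨u, hu0, fun w hw => LinearMap.congr_fun hzero ⟨w, hw⟩⟩

end SpectralSubspace

section Dissipative

variable {V : Type*} [AddCommGroup V] [Module ℂ V] {h : V →ₗ⋆[ℂ] V →ₗ[ℂ] ℂ}
  {f : Module.End ℂ V} {W : Submodule ℂ V}

/-- The operator `f` is dissipative for the Hermitian form `h`, and no eigenvector of `f` is free
of dissipation. The latter is Hautus' form of the observability of `f` through the dissipation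
rate. -/
structure IsObservablyDissipative (h : V →ₗ⋆[ℂ] V →ₗ[ℂ] ℂ) (f : Module.End ℂ V) : Prop where
  isSymm : h.IsSymm
  re_nonpos (v : V) : (h v (f v)).re ≤ 0
  re_ne_zero {μ : ℂ} {v : V} : f.HasEigenvector μ v → (h v (f v)).re ≠ 0

namespace IsObservablyDissipative

lemma neg (hd : IsObservablyDissipative h f) : IsObservablyDissipative (-h) (-f) where
  isSymm := ⟨fun u v => by simpa using hd.isSymm.eq u v⟩
  re_nonpos v := by simpa using hd.re_nonpos v
  re_ne_zero hv := by simpa using hd.re_ne_zero (hasEigenvector_of_neg hv)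

lemma restrict (hd : IsObservablyDissipative h f) (hW : ∀ v ∈ W, f v ∈ W) :
    IsObservablyDissipative (h.domRestrict₁₂ W W) (f.restrict hW) where
  isSymm := hd.isSymm.domRestrict W
  re_nonpos w := hd.re_nonpos w
  re_ne_zero hw := hd.re_ne_zero (hasEigenvector_of_restrict hw)

lemma re_apply_smul_self (hd : IsObservablyDissipative h f) (c : ℂ) (v : V) :
    (h v (c • v)).re = c.re * (h v v).re := by
  have him : (h v v).im = 0 := Complex.conj_eq_iff_im.1 (hd.isSymm.eq v v)
  rw [map_smul, smul_eq_mul, Complex.mul_re, him, mul_zero, sub_zero]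

lemma re_mul_re_apply_self_neg (hd : IsObservablyDissipative h f) {μ : ℂ} {v : V}
    (hv : f.HasEigenvector μ v) : μ.re * (h v v).re < 0 := by
  rw [← hd.re_apply_smul_self, ← hv.apply_eq_smul]
  exact (hd.re_nonpos v).lt_of_ne (hd.re_ne_zero hv)

lemma re_apply_add_re_apply_eq_zero (hd : IsObservablyDissipative h f) {u : V}
    (hu : (h u (f u)).re = 0) (v : V) : (h u (f v)).re + (h v (f u)).re = 0 := by
  -- Dissipativity at `u + t • v` makes a quadratic polynomial in `t` with no constant term
  -- nonnegative, so its linear coefficient vanishes.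
  have hquad (t : ℝ) :
      0 ≤ -(h v (f v)).re * (t * t) + -((h u (f v)).re + (h v (f u)).re) * t + 0 := by
    have ht := hd.re_nonpos (u + (t : ℂ) • v)
    simp only [map_add, map_smul, LinearMap.map_smulₛₗ, LinearMap.add_apply, LinearMap.smul_apply,
      Complex.conj_ofReal, smul_eq_mul, Complex.add_re, Complex.re_ofReal_mul, hu] at ht
    linarith
  have hdisc := discrim_le_zero hquad
  rw [discrim, mul_zero, sub_zero, neg_sq] at hdisc
  exact pow_eq_zero_iff two_ne_zero |>.1 (hdisc.antisymm (sq_nonneg _))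

lemma re_apply_self_pos_of_ortho (hd : IsObservablyDissipative h f) {ν : ℂ} (hν : ν.re < 0)
    (hfW : ∀ v, f v - ν • v ∈ W) (hpos : ∀ w ∈ W, w ≠ 0 → 0 < (h w w).re) {u : V} (hu0 : u ≠ 0)
    (hu : ∀ w ∈ W, h w u = 0) : 0 < (h u u).re := by
  set w := f u - ν • u with hw
  have hfu : f u = ν • u + w := by rw [hw, add_sub_cancel]
  have hu' (v : V) (hv : v ∈ W) : h u v = 0 := hd.isSymm.eq_iff.1 (hu v hv)
  have hrate : (h u (f u)).re = ν.re * (h u u).re := by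
    rw [hfu, map_add, hu' w (hfW u), add_zero, hd.re_apply_smul_self]
  have hnonneg : 0 ≤ (h u u).re :=
    nonneg_of_mul_nonpos_right (hrate ▸ hd.re_nonpos u) hν
  refine hnonneg.lt_of_ne' fun h0 => ?_
  rw [h0, mul_zero] at hrate
  have hfw : f w ∈ W := by
    rw [← sub_add_cancel (f w) (ν • w)]
    exact W.add_mem (hfW w) (W.smul_mem ν (hfW u))
  have hww : (h w w).re = 0 := by
    have hpolar := hd.re_apply_add_re_apply_eq_zero hrate w
    rwa [hu' _ hfw, hfu, map_add, map_smul, hu w (hfW u), smul_zero, zero_add, Complex.zero_re,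
      zero_add] at hpolar
  have hw0 : w = 0 := by
    by_contra hne
    exact (hpos w (hfW u) hne).ne' hww
  have heig : f.HasEigenvector ν u :=
    ⟨Module.End.mem_eigenspace_iff.2 (by rw [hfu, hw0, add_zero]), hu0⟩
  exact hd.re_ne_zero heig hrate

end IsObservablyDissipative

lemma re_apply_self_pos_of_isCoatom (hh : h.IsSymm) (hW : IsCoatom W)
    (hpos : ∀ w ∈ W, w ≠ 0 → 0 < (h w w).re) {u : V} (hu : ∀ w ∈ W, h w u = 0)
    (hupos : 0 < (h u u).re) {v : V} (hv : v ≠ 0) : 0 < (h v v).re := by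
  have huW : u ∉ W := fun huW => by simp [hu u huW] at hupos
  have htop : W ⊔ Submodule.span ℂ {u} = ⊤ :=
    hW.2 _ (left_lt_sup.2 (by simpa using huW))
  obtain ⟨w, hw, c, rfl⟩ : ∃ w ∈ W, ∃ c : ℂ, w + c • u = v := by
    obtain ⟨w, hw, y, hy, rfl⟩ := Submodule.mem_sup.1 (htop ▸ Submodule.mem_top : v ∈ _)
    obtain ⟨c, rfl⟩ := Submodule.mem_span_singleton.1 hy
    exact ⟨w, hw, c, rfl⟩
  have hexp : (h (w + c • u) (w + c • u)).re = (h w w).re + Complex.normSq c * (h u u).re := by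
    simp only [map_add, map_smul, LinearMap.map_smulₛₗ, LinearMap.add_apply, LinearMap.smul_apply,
      hu w hw, hh.eq_iff.1 (hu w hw), smul_eq_mul, mul_zero, zero_add, add_zero, Complex.add_re]
    rw [mul_left_comm, ← mul_assoc, ← Complex.normSq_eq_conj_mul_self, Complex.re_ofReal_mul]
  rw [hexp]
  rcases eq_or_ne w 0 with rfl | hw0
  · have hc : c ≠ 0 := by
      rintro rfl
      simp at hv
    simpa using mul_pos (Complex.normSq_pos.2 hc) hupos
  · exact add_pos_of_pos_of_nonneg (hpos w hw hw0) (mul_nonneg (Complex.normSq_nonneg c) hupos.le)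

namespace IsObservablyDissipative

theorem re_apply_self_pos [FiniteDimensional ℂ V] (hd : IsObservablyDissipative h f)
    (hs : ∀ μ, f.HasEigenvalue μ → μ.re < 0) {v : V} (hv : v ≠ 0) : 0 < (h v v).re := by
  induction hn : Module.finrank ℂ V using Nat.strong_induction_on generalizing V with
  | _ n ih =>
  have : Nontrivial V := ⟨v, 0, hv⟩
  obtain ⟨ν, hν, W, hcoatom, hfW⟩ := exists_isCoatom_forall_sub_smul_mem f
  have hW (w : V) (hw : w ∈ W) : f w ∈ W := by
    rw [← sub_add_cancel (f w) (ν • w)]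
    exact W.add_mem (hfW w) (W.smul_mem ν hw)
  have hpos (w : V) (hw : w ∈ W) (hw0 : w ≠ 0) : 0 < (h w w).re := by
    refine ih _ (hn ▸ Submodule.finrank_lt hcoatom.1) (hd.restrict hW) (fun μ hμ => ?_)
      (v := ⟨w, hw⟩) (by simpa using hw0) rfl
    obtain ⟨x, hx⟩ := hμ.exists_hasEigenvector
    exact hs μ (Module.End.hasEigenvalue_of_hasEigenvector (hasEigenvector_of_restrict hx))
  obtain ⟨u, hu0, hu⟩ := exists_ne_zero_forall_apply_eq_zero h hcoatom.1
  exact re_apply_self_pos_of_isCoatom hd.isSymm hcoatom hpos hu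
    (hd.re_apply_self_pos_of_ortho (hs ν hν) hfW hpos hu0 hu) hv

lemma re_apply_self_pos_of_mem [FiniteDimensional ℂ V] (hd : IsObservablyDissipative h f)
    (hW : ∀ v ∈ W, f v ∈ W) (hs : ∀ μ, ∀ v ∈ W, f.HasEigenvector μ v → μ.re < 0) {v : V}
    (hv : v ∈ W) (hv0 : v ≠ 0) : 0 < (h v v).re := by
  refine (hd.restrict hW).re_apply_self_pos (fun μ hμ => ?_) (v := ⟨v, hv⟩) (by simpa using hv0)
  obtain ⟨w, hw⟩ := hμ.exists_hasEigenvector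
  exact hs μ w w.2 (hasEigenvector_of_restrict hw)

lemma re_apply_self_pos_of_mem_spectralSubspace [FiniteDimensional ℂ V]
    (hd : IsObservablyDissipative h f) {v : V} (hv : v ∈ spectralSubspace f {μ | μ.re < 0})
    (hv0 : v ≠ 0) : 0 < (h v v).re := by
  refine hd.re_apply_self_pos_of_mem (fun w hw => apply_mem_spectralSubspace hw)
    (fun μ w hw hμ => ?_) hv hv0
  simpa using mem_of_hasEigenvector_of_mem_spectralSubspace hμ hw

lemma re_apply_self_neg_of_mem_spectralSubspace [FiniteDimensional ℂ V]
    (hd : IsObservablyDissipative h f) {v : V} (hv : v ∈ spectralSubspace f {μ | 0 < μ.re})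
    (hv0 : v ≠ 0) : (h v v).re < 0 := by
  have hpos : 0 < ((-h) v v).re := by
    refine hd.neg.re_apply_self_pos_of_mem
      (fun w hw => neg_mem (apply_mem_spectralSubspace hw)) (fun μ w hw hμ => ?_) hv hv0
    simpa using mem_of_hasEigenvector_of_mem_spectralSubspace (hasEigenvector_of_neg hμ) hw
  simpa using hpos

lemma spectralSubspace_sup_spectralSubspace_eq_top [FiniteDimensional ℂ V]
    (hd : IsObservablyDissipative h f) :
    spectralSubspace f {μ | μ.re < 0} ⊔ spectralSubspace f {μ | 0 < μ.re} = ⊤ := by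
  rw [← spectralSubspace_union, eq_top_iff]
  refine le_spectralSubspace (fun _ _ => Submodule.mem_top) fun μ v _ hμ => ?_
  exact lt_or_gt_of_ne (left_ne_zero_of_mul (hd.re_mul_re_apply_self_neg hμ).ne)

lemma le_spectralSubspace_of_re_apply_self_pos [FiniteDimensional ℂ V]
    (hd : IsObservablyDissipative h f) (hW : ∀ v ∈ W, f v ∈ W)
    (hpos : ∀ v ∈ W, v ≠ 0 → 0 < (h v v).re) : W ≤ spectralSubspace f {μ | μ.re < 0} :=
  le_spectralSubspace hW fun _ v hv hμ =>
    neg_of_mul_neg_left (hd.re_mul_re_apply_self_neg hμ) (hpos v hv hμ.2).le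

end IsObservablyDissipative

end Dissipative

lemma star_dotProduct_mulVec_comm {R ι κ : Type*} [NonUnitalSemiring R] [StarRing R] [Fintype ι]
    [Fintype κ] (M : Matrix ι κ R) (x : ι → R) (y : κ → R) :
    star x ⬝ᵥ M *ᵥ y = star (star y ⬝ᵥ Mᴴ *ᵥ x) := by
  rw [← star_dotProduct, star_mulVec, conjTranspose_conjTranspose, dotProduct_mulVec]

section Observability

variable {R ι κ : Type*} [Fintype ι] [DecidableEq ι]

/-- Observability of the pair `(C, A)`: the only state whose whole trajectory under `A` is invisible
to `C` is `0`. All powers of `A` are allowed, which by the Cayley–Hamilton theorem amounts to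
allowing those below the size of `A`. -/
def IsObservable [CommSemiring R] (C : Matrix κ ι R) (A : Matrix ι ι R) : Prop :=
  ∀ x : ι → R, (∀ k : ℕ, C *ᵥ (A ^ k *ᵥ x) = 0) → x = 0

/-- Controllability of the pair `(A, B)`: the ranges of the matrices `A ^ k * B` span the whole
space. As for `IsObservable`, all powers of `A` are allowed. -/
def IsControllable [CommSemiring R] [Fintype κ] (A : Matrix ι ι R) (B : Matrix ι κ R) : Prop :=
  Submodule.span R {x : ι → R | ∃ (k : ℕ) (v : κ → R), x = (A ^ k * B) *ᵥ v} = ⊤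

lemma IsObservable.eq_zero_of_mulVec_eq_smul [CommSemiring R] {C : Matrix κ ι R}
    {A : Matrix ι ι R} (h : IsObservable C A) {μ : R} {v : ι → R} (hA : A *ᵥ v = μ • v)
    (hC : C *ᵥ v = 0) : v = 0 := by
  refine h v fun k => ?_
  have hpow : A ^ k *ᵥ v = μ ^ k • v := by
    induction k with
    | zero => simp
    | succ k ih => rw [pow_succ, ← mulVec_mulVec, hA, mulVec_smul, ih, smul_smul, pow_succ']
  rw [hpow, mulVec_smul, hC, smul_zero]

lemma IsObservable.const_smul [Field R] {C : Matrix κ ι R} {A : Matrix ι ι R}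
    (h : IsObservable C A) {c : R} (hc : c ≠ 0) : IsObservable C (c • A) := by
  refine fun x hx => h x fun k => ?_
  have hk := hx k
  rwa [smul_pow, smul_mulVec, mulVec_smul, smul_eq_zero_iff_right (pow_ne_zero k hc)] at hk

lemma IsObservable.mul_conjTranspose [CommRing R] [PartialOrder R] [StarRing R] [StarOrderedRing R]
    [NoZeroDivisors R] [Fintype κ] {B : Matrix ι κ R} {A : Matrix ι ι R}
    (h : IsObservable Bᴴ A) : IsObservable (B * Bᴴ) A :=
  fun x hx => h x fun k => (self_mul_conjTranspose_mulVec_eq_zero B _).1 (hx k)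

lemma IsControllable.isObservable_conjTranspose [CommRing R] [StarRing R] [Fintype κ]
    {A : Matrix ι ι R} {B : Matrix ι κ R} (h : IsControllable A B) : IsObservable Bᴴ Aᴴ := by
  intro x hx
  suffices hzero : ∀ y, star x ⬝ᵥ y = 0 from star_eq_zero.1 (dotProduct_eq_zero _ hzero)
  intro y
  have hy : y ∈ Submodule.span R {x : ι → R | ∃ (k : ℕ) (v : κ → R), x = (A ^ k * B) *ᵥ v} :=
    h ▸ Submodule.mem_top
  induction hy using Submodule.span_induction with
  | zero => exact dotProduct_zero _
  | add y z _ _ hy hz => rw [dotProduct_add, hy, hz, add_zero]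
  | smul a y _ hy => rw [dotProduct_smul, hy, smul_zero]
  | mem y hy =>
    obtain ⟨k, v, rfl⟩ := hy
    have hk := hx k
    rw [← conjTranspose_pow, mulVec_mulVec, ← conjTranspose_mul] at hk
    rw [star_dotProduct_mulVec_comm, hk, dotProduct_zero, star_zero]

end Observability

section Hamiltonian

variable {K ι : Type*} [CommRing K] [StarRing K] [Fintype ι] {A R Q X : Matrix ι ι K}

/-- The algebraic Riccati equation `Aᴴ X + X A + Q = X R X` of linear-quadratic control. -/
def IsRiccatiSolution (A R Q X : Matrix ι ι K) : Prop :=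
  Aᴴ * X + X * A + Q = X * R * X

/-- The Hamiltonian operator `(x, y) ↦ (A x - R y, -Q x - Aᴴ y)`, whose invariant graphs are the
solutions of the Riccati equation. -/
def hamiltonian (A R Q : Matrix ι ι K) : Module.End K ((ι → K) × (ι → K)) :=
  (A.mulVecLin ∘ₗ .fst K _ _ - R.mulVecLin ∘ₗ .snd K _ _).prod
    (-(Q.mulVecLin ∘ₗ .fst K _ _) - Aᴴ.mulVecLin ∘ₗ .snd K _ _)

lemma hamiltonian_apply (A R Q : Matrix ι ι K) (u : (ι → K) × (ι → K)) :
    hamiltonian A R Q u = (A *ᵥ u.1 - R *ᵥ u.2, -(Q *ᵥ u.1) - Aᴴ *ᵥ u.2) :=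
  rfl

lemma isRiccatiSolution_iff_forall_hamiltonian_mem_graph :
    IsRiccatiSolution A R Q X ↔
      ∀ u ∈ X.mulVecLin.graph, hamiltonian A R Q u ∈ X.mulVecLin.graph := by
  have hgraph (x : ι → K) : hamiltonian A R Q (x, X *ᵥ x) ∈ X.mulVecLin.graph ↔
      (Aᴴ * X + X * A + Q) *ᵥ x = (X * R * X) *ᵥ x := by
    have hdiff : X *ᵥ (A *ᵥ x - R *ᵥ X *ᵥ x) - (-(Q *ᵥ x) - Aᴴ *ᵥ X *ᵥ x) =
        (Aᴴ * X + X * A + Q) *ᵥ x - (X * R * X) *ᵥ x := by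
      simp only [mulVec_sub, add_mulVec, mulVec_mulVec, Matrix.mul_assoc]
      abel
    rw [LinearMap.mem_graph_iff, hamiltonian_apply, mulVecLin_apply, eq_comm, ← sub_eq_zero, hdiff,
      sub_eq_zero]
  rw [IsRiccatiSolution, ext_iff_mulVec]
  refine ⟨fun h u hu => ?_, fun h x => (hgraph x).1 (h _ rfl)⟩
  obtain ⟨x, y⟩ := u
  obtain rfl : y = X *ᵥ x := hu
  exact (hgraph x).2 (h x)

lemma IsRiccatiSolution.conjTranspose (hR : R.IsHermitian) (hQ : Q.IsHermitian)
    (h : IsRiccatiSolution A R Q X) : IsRiccatiSolution A R Q Xᴴ := by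
  have hadj := congrArg Matrix.conjTranspose h
  simpa only [IsRiccatiSolution, conjTranspose_add, conjTranspose_mul, conjTranspose_conjTranspose,
    hR.eq, hQ.eq, Matrix.mul_assoc, add_comm (Xᴴ * A)] using hadj

end Hamiltonian

lemma exists_eq_graph_of_sup_eq_top {K E F : Type*} [Field K] [AddCommGroup E] [Module K E]
    [AddCommGroup F] [Module K F] [FiniteDimensional K E] [FiniteDimensional K F]
    (hEF : Module.finrank K E ≤ Module.finrank K F) {W₁ W₂ : Submodule K (E × F)}
    (hsup : W₁ ⊔ W₂ = ⊤) (h₁ : ∀ y, (0, y) ∈ W₁ → y = 0) (h₂ : ∀ y, (0, y) ∈ W₂ → y = 0) :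
    ∃ f : E →ₗ[K] F, W₁ = f.graph := by
  have hinj (W : Submodule K (E × F)) (h : ∀ y, (0, y) ∈ W → y = 0) :
      Function.Injective (LinearMap.fst K E F ∘ₗ W.subtype) := by
    refine (injective_iff_map_eq_zero _).2 ?_
    rintro ⟨⟨x, y⟩, hxy⟩ (rfl : x = 0)
    simpa using h y hxy
  have hdim₁ := LinearMap.finrank_le_finrank_of_injective (hinj W₁ h₁)
  have hdim₂ := LinearMap.finrank_le_finrank_of_injective (hinj W₂ h₂)
  have hdim := Submodule.finrank_add_le_finrank_add_finrank W₁ W₂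
  rw [hsup, finrank_top, Module.finrank_prod] at hdim
  exact Submodule.exists_eq_graph ⟨hinj W₁ h₁,
    (LinearMap.injective_iff_surjective_of_finrank_eq_finrank (by omega)).1 (hinj W₁ h₁)⟩

section Accretive

variable {𝕜 ι : Type*} [RCLike 𝕜] [Fintype ι] {X : Matrix ι ι 𝕜}

lemma mulVec_eq_zero_of_re_dotProduct_eq_zero (hX : X.PosSemidef) {x : ι → 𝕜}
    (hx : RCLike.re (star x ⬝ᵥ X *ᵥ x) = 0) : X *ᵥ x = 0 :=
  (hX.dotProduct_mulVec_zero_iff x).1 <|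
    RCLike.ext (by simpa using hx) (by simpa using hX.1.im_star_dotProduct_mulVec_self x)

/-- A strictly accretive matrix: the Hermitian part is positive definite. -/
def IsStrictlyAccretive (X : Matrix ι ι 𝕜) : Prop :=
  ∀ x ≠ 0, 0 < RCLike.re (star x ⬝ᵥ X *ᵥ x)

lemma IsStrictlyAccretive.conjTranspose (hX : IsStrictlyAccretive X) :
    IsStrictlyAccretive Xᴴ := fun x hx => by
  rw [star_dotProduct_mulVec_comm, conjTranspose_conjTranspose, RCLike.star_def, RCLike.conj_re]
  exact hX x hx

lemma IsStrictlyAccretive.posDef (hX : IsStrictlyAccretive X) (hh : X.IsHermitian) : X.PosDef :=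
  .of_dotProduct_mulVec_pos hh fun x hx =>
    RCLike.pos_iff.2 ⟨hX x hx, hh.im_star_dotProduct_mulVec_self x⟩

end Accretive

section HyperbolicForm

variable {ι : Type*} [Fintype ι] {A R Q X Y : Matrix ι ι ℂ}

/-- The hyperbolic Hermitian form `(u, v) ↦ ⟪u.1, v.2⟫ + ⟪u.2, v.1⟫`, for which the Hamiltonian
operator is dissipative. -/
def hyperbolicForm : ((ι → ℂ) × (ι → ℂ)) →ₗ⋆[ℂ] ((ι → ℂ) × (ι → ℂ)) →ₗ[ℂ] ℂ :=
  LinearMap.mk₂'ₛₗ (starRingEnd ℂ) (RingHom.id ℂ)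
    (fun u v => star u.1 ⬝ᵥ v.2 + star u.2 ⬝ᵥ v.1)
    (fun u u' v => by simp only [Prod.fst_add, Prod.snd_add, star_add, add_dotProduct]; abel)
    (fun c u v => by simp [mul_add])
    (fun u v v' => by simp only [Prod.fst_add, Prod.snd_add, dotProduct_add]; abel)
    (fun c u v => by simp [mul_add])

lemma hyperbolicForm_apply (u v : (ι → ℂ) × (ι → ℂ)) :
    hyperbolicForm u v = star u.1 ⬝ᵥ v.2 + star u.2 ⬝ᵥ v.1 :=
  rfl

lemma hyperbolicForm_isSymm : (hyperbolicForm (ι := ι)).IsSymm where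
  eq u v := by
    rw [hyperbolicForm_apply, hyperbolicForm_apply, map_add, starRingEnd_apply, starRingEnd_apply,
      ← star_dotProduct, ← star_dotProduct, add_comm]

lemma re_hyperbolicForm_hamiltonian (A R Q : Matrix ι ι ℂ) (u : (ι → ℂ) × (ι → ℂ)) :
    (hyperbolicForm u (hamiltonian A R Q u)).re =
      -((star u.1 ⬝ᵥ Q *ᵥ u.1).re + (star u.2 ⬝ᵥ R *ᵥ u.2).re) := by
  have hadj : (star u.1 ⬝ᵥ Aᴴ *ᵥ u.2).re = (star u.2 ⬝ᵥ A *ᵥ u.1).re := by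
    rw [star_dotProduct_mulVec_comm, conjTranspose_conjTranspose, Complex.star_def, Complex.conj_re]
  rw [hyperbolicForm_apply, hamiltonian_apply]
  simp only [dotProduct_sub, dotProduct_neg, Complex.add_re, Complex.sub_re, Complex.neg_re, hadj]
  ring

lemma isObservablyDissipative_hamiltonian [DecidableEq ι] (hR : R.PosSemidef) (hQ : Q.PosSemidef)
    (hRA : IsObservable R Aᴴ) (hQA : IsObservable Q A) :
    IsObservablyDissipative hyperbolicForm (hamiltonian A R Q) where
  isSymm := hyperbolicForm_isSymm
  re_nonpos u := by
    rw [re_hyperbolicForm_hamiltonian, neg_nonpos]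
    exact add_nonneg (hQ.re_dotProduct_nonneg _) (hR.re_dotProduct_nonneg _)
  re_ne_zero {μ u} hu hre := by
    rw [re_hyperbolicForm_hamiltonian, neg_eq_zero] at hre
    obtain ⟨hre₁, hre₂⟩ := (add_eq_zero_iff_of_nonneg (hQ.re_dotProduct_nonneg u.1)
      (hR.re_dotProduct_nonneg u.2)).1 hre
    have hQu := mulVec_eq_zero_of_re_dotProduct_eq_zero hQ hre₁
    have hRu := mulVec_eq_zero_of_re_dotProduct_eq_zero hR hre₂
    have heig := hu.apply_eq_smul
    rw [hamiltonian_apply, hQu, hRu, sub_zero, neg_zero, zero_sub, Prod.ext_iff] at heig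
    obtain ⟨hA, hAH⟩ : A *ᵥ u.1 = μ • u.1 ∧ -(Aᴴ *ᵥ u.2) = μ • u.2 := heig
    rw [neg_eq_iff_eq_neg, ← neg_smul] at hAH
    exact hu.2 <| Prod.ext (hQA.eq_zero_of_mulVec_eq_smul hA hQu)
      (hRA.eq_zero_of_mulVec_eq_smul hAH hRu)

lemma re_hyperbolicForm_graph (X : Matrix ι ι ℂ) (x : ι → ℂ) :
    (hyperbolicForm (x, X *ᵥ x) (x, X *ᵥ x)).re = 2 * (star x ⬝ᵥ X *ᵥ x).re := by
  rw [hyperbolicForm_apply, Complex.add_re, star_dotProduct (X *ᵥ x), Complex.star_def,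
    Complex.conj_re, two_mul]

lemma eq_zero_of_zero_mk_mem {W : Submodule ℂ ((ι → ℂ) × (ι → ℂ))}
    (hW : ∀ u ∈ W, u ≠ 0 → (hyperbolicForm u u).re ≠ 0) {y : ι → ℂ} (hy : (0, y) ∈ W) :
    y = 0 := by
  by_contra hne
  exact hW _ hy (fun h => hne (congrArg Prod.snd h)) (by simp [hyperbolicForm_apply])

lemma graph_le_spectralSubspace
    (hd : IsObservablyDissipative hyperbolicForm (hamiltonian A R Q))
    (hX : IsRiccatiSolution A R Q X) (hpos : IsStrictlyAccretive X) :
    X.mulVecLin.graph ≤ spectralSubspace (hamiltonian A R Q) {μ | μ.re < 0} := by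
  refine hd.le_spectralSubspace_of_re_apply_self_pos
    (isRiccatiSolution_iff_forall_hamiltonian_mem_graph.1 hX) ?_
  rintro ⟨x, y⟩ (rfl : y = X *ᵥ x) hne
  have hx : x ≠ 0 := by
    rintro rfl
    simp at hne
  rw [re_hyperbolicForm_graph]
  exact mul_pos two_pos (hpos x hx)

lemma eq_of_isRiccatiSolution (hd : IsObservablyDissipative hyperbolicForm (hamiltonian A R Q))
    (hX : IsRiccatiSolution A R Q X) (hXpos : IsStrictlyAccretive X)
    (hY : IsRiccatiSolution A R Q Y) (hYpos : IsStrictlyAccretive Y) : X = Y := by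
  refine ext_iff_mulVec.2 fun x => sub_eq_zero.1 ?_
  have hmem : (0, X *ᵥ x - Y *ᵥ x) ∈ spectralSubspace (hamiltonian A R Q) {μ | μ.re < 0} := by
    have hsub := sub_mem (graph_le_spectralSubspace hd hX hXpos (x := (x, X *ᵥ x)) rfl)
      (graph_le_spectralSubspace hd hY hYpos (x := (x, Y *ᵥ x)) rfl)
    rwa [Prod.mk_sub_mk, sub_self] at hsub
  exact eq_zero_of_zero_mk_mem
    (fun _ hu hu0 => (hd.re_apply_self_pos_of_mem_spectralSubspace hu hu0).ne') hmem

lemma exists_isStrictlyAccretive_isRiccatiSolution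
    (hd : IsObservablyDissipative hyperbolicForm (hamiltonian A R Q)) :
    ∃ X, IsStrictlyAccretive X ∧ IsRiccatiSolution A R Q X := by
  classical
  obtain ⟨f, hf⟩ := exists_eq_graph_of_sup_eq_top le_rfl
    hd.spectralSubspace_sup_spectralSubspace_eq_top
    (fun y => eq_zero_of_zero_mk_mem fun _ hu hu0 =>
      (hd.re_apply_self_pos_of_mem_spectralSubspace hu hu0).ne')
    (fun y => eq_zero_of_zero_mk_mem fun _ hu hu0 =>
      (hd.re_apply_self_neg_of_mem_spectralSubspace hu hu0).ne)
  obtain ⟨X, rfl⟩ : ∃ X : Matrix ι ι ℂ, X.mulVecLin = f := ⟨_, toLin'_toMatrix' f⟩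
  refine ⟨X, fun x hx => ?_, ?_⟩
  · have hmem : (x, X *ᵥ x) ∈ X.mulVecLin.graph := rfl
    have hpos := hd.re_apply_self_pos_of_mem_spectralSubspace (hf ▸ hmem)
      fun h => hx (congrArg Prod.fst h)
    rw [re_hyperbolicForm_graph] at hpos
    exact pos_of_mul_pos_right hpos two_pos.le
  · rw [isRiccatiSolution_iff_forall_hamiltonian_mem_graph, ← hf]
    exact fun _ => apply_mem_spectralSubspace

theorem exists_posDef_isRiccatiSolution [DecidableEq ι] (hR : R.PosSemidef) (hQ : Q.PosSemidef)
    (hRA : IsObservable R Aᴴ) (hQA : IsObservable Q A) :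
    ∃ X : Matrix ι ι ℂ, X.PosDef ∧ IsRiccatiSolution A R Q X ∧
      ∀ Y, IsStrictlyAccretive Y → IsRiccatiSolution A R Q Y → Y = X := by
  have hd := isObservablyDissipative_hamiltonian hR hQ hRA hQA
  obtain ⟨X, hpos, hX⟩ := exists_isStrictlyAccretive_isRiccatiSolution hd
  have hherm : X.IsHermitian :=
    eq_of_isRiccatiSolution hd (hX.conjTranspose hR.1 hQ.1) hpos.conjTranspose hX hpos
  exact ⟨X, hpos.posDef hherm, hX, fun Y hYpos hY => eq_of_isRiccatiSolution hd hY hYpos hX hpos⟩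

end HyperbolicForm

lemma isRiccatiSolution_I_smul_conjTranspose_iff {ι κ₁ κ₂ : Type*} [Fintype ι] [Fintype κ₁]
    [Fintype κ₂] {γ X : Matrix ι ι ℂ} {ϑ₁ : Matrix ι κ₁ ℂ} {ϑ₂ : Matrix ι κ₂ ℂ} :
    IsRiccatiSolution (Complex.I • γᴴ) (ϑ₁ * ϑ₁ᴴ) (ϑ₂ * ϑ₂ᴴ) X ↔
      γ * X - X * γᴴ = Complex.I • (X * ϑ₁ * ϑ₁ᴴ * X - ϑ₂ * ϑ₂ᴴ) := by
  have hdiff : (Complex.I • γᴴ)ᴴ * X + X * (Complex.I • γᴴ) + ϑ₂ * ϑ₂ᴴ - X * (ϑ₁ * ϑ₁ᴴ) * X =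
      -Complex.I • (γ * X - X * γᴴ - Complex.I • (X * ϑ₁ * ϑ₁ᴴ * X - ϑ₂ * ϑ₂ᴴ)) := by
    rw [smul_sub (-Complex.I) _ (Complex.I • _), smul_smul, neg_mul, Complex.I_mul_I, neg_neg,
      one_smul, smul_sub, conjTranspose_smul, conjTranspose_conjTranspose, Complex.star_def,
      Complex.conj_I, Matrix.smul_mul, Matrix.mul_smul, neg_smul, neg_smul]
    simp only [Matrix.mul_assoc]
    abel
  rw [IsRiccatiSolution, ← sub_eq_zero, hdiff,
    smul_eq_zero_iff_right (neg_ne_zero.2 Complex.I_ne_zero), sub_eq_zero]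

theorem stmt16_general {ι κ₁ κ₂ : Type*} [Fintype ι] [DecidableEq ι] [Fintype κ₁] [Fintype κ₂]
    {γ : Matrix ι ι ℂ} {ϑ₁ : Matrix ι κ₁ ℂ} {ϑ₂ : Matrix ι κ₂ ℂ} (hobs : IsObservable ϑ₁ᴴ γ)
    (hctrl : IsControllable γ ϑ₂) :
    ∃ X : Matrix ι ι ℂ, X.PosDef ∧
      γ * X - X * γᴴ = Complex.I • (X * ϑ₁ * ϑ₁ᴴ * X - ϑ₂ * ϑ₂ᴴ) ∧
      ∀ Y, IsStrictlyAccretive Y →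
        γ * Y - Y * γᴴ = Complex.I • (Y * ϑ₁ * ϑ₁ᴴ * Y - ϑ₂ * ϑ₂ᴴ) → Y = X := by
  have hobs' : IsObservable (ϑ₁ * ϑ₁ᴴ) (Complex.I • γᴴ)ᴴ := by
    rw [conjTranspose_smul, conjTranspose_conjTranspose]
    exact hobs.mul_conjTranspose.const_smul (star_ne_zero.2 Complex.I_ne_zero)
  have hctrl' : IsObservable (ϑ₂ * ϑ₂ᴴ) (Complex.I • γᴴ) :=
    hctrl.isObservable_conjTranspose.mul_conjTranspose.const_smul Complex.I_ne_zero
  simpa only [isRiccatiSolution_I_smul_conjTranspose_iff] using exists_posDef_isRiccatiSolution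
    (posSemidef_self_mul_conjTranspose ϑ₁) (posSemidef_self_mul_conjTranspose ϑ₂) hobs' hctrl'

theorem stmt16 {n m : ℕ}
    (γ : Matrix (Fin n) (Fin n) ℂ)
    (ϑ₁ ϑ₂ : Matrix (Fin n) (Fin m) ℂ)
    (hobs : ∀ x : Fin n → ℂ, (∀ k < n, ϑ₁ᴴ *ᵥ ((γ ^ k) *ᵥ x) = 0) → x = 0)
    (hctrl : Submodule.span ℂ
      {x : Fin n → ℂ | ∃ k < n, ∃ v : Fin m → ℂ, x = (γ ^ k * ϑ₂) *ᵥ v} = ⊤) :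
    ∃! X : Matrix (Fin n) (Fin n) ℂ, X.PosDef ∧
      γ * X - X * γᴴ = Complex.I • (X * ϑ₁ * ϑ₁ᴴ * X - ϑ₂ * ϑ₂ᴴ) := by
  have hobs' : IsObservable ϑ₁ᴴ γ := fun x hx => hobs x fun k _ => hx k
  have hctrl' : IsControllable γ ϑ₂ :=
    top_unique (hctrl ▸ Submodule.span_mono fun x ⟨k, _, v, hv⟩ => ⟨k, v, hv⟩)
  obtain ⟨X, hpos, hX, huniq⟩ := stmt16_general hobs' hctrl'
  exact ⟨X, ⟨hpos, hX⟩, fun Y hY => huniq Y (fun _ => hY.1.re_dotProduct_pos) hY.2⟩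
end
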